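/- Let M ≥ 2 be an integer and let W, Y1, Y2, and X_1, …, X_M, J_1, …, J_M, Z_1, …, Z_M be random variables with values in finite sets on a common probability space. Suppose: (i) Y1 and Y2 are each deterministic functions of the tuple (X_1, …, X_M); (ii) for each k ∈ {1, …, M}, Z_k is a deterministic function of X_k and also a deterministic function of the tuple consisting of Y1 and (X_j)_{j ≠ k}; (iii) for each k ∈ {1, …, M}, H(X_k | (J_1, …, J_M, (X_j)_{j ≠ k})) = H(X_k | J_k); and (iv) I(W; Y1 | (J_1, …, J_M)) = 0. Then (M + 1)·I(W; Y1) − I(W; Y2) ≤ ∑_{k=1}^M H(J_k) + M·H(Y1) − H(Y2) + ∑_{k=1}^M H(X_k | Z_k). -/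

import Mathlib

/-!
Write `X = (X_1, …, X_M)`, `J = (J_1, …, J_M)` and `X_{-k} = (X_j)_{j ≠ k}`.

Two facts about entropy carry the argument: it does not increase under deterministic functions
(`H_mono`), and it is submodular (`H_submod`), the latter by `log t ≤ t - 1`.

* Data processing gives `I(W; Y1) - I(W; Y2) ≤ H(X) - H(Y2)`, and, by subadditivity over the pairs
  `(X_k, J_k)`, `H(X) ≤ ∑ H(X_k, J_k) = ∑ H(J_k) + ∑ H(X_k | J_k)`.
* For each `k`, `H(Y1 | W) ≥ H(Y1 | W, J) = H(Y1 | J) ≥ H(Y1 | J, X_{-k}) ≥ H(Z_k | J, X_{-k})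
  ≥ H(X_k | J, X_{-k}) - H(X_k | Z_k) = H(X_k | J_k) - H(X_k | Z_k)`.

Summing the second bound over `k` and using `M I(W; Y1) = M H(Y1) - M H(Y1 | W)`, the terms
`H(X_k | J_k)` cancel.
-/

/-!
Shannon entropy, conditional entropy, and mutual information for discrete random
variables defined on a common probability space modelled by a `PMF`.
The logarithm is the natural logarithm and `0 log 0 = 0` (via `Real.negMulLog`).
-/

namespace DiamondWiretap

/-- Shannon entropy `H(X)` of a random variable `X` on the probability space `(Ω, p)`. -/
noncomputable def H {Ω S : Type*} (p : PMF Ω) (X : Ω → S) : ℝ :=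
  ∑' s : S, Real.negMulLog ((p.map X) s).toReal

/-- Joint entropy `H(X, Y)`. -/
noncomputable def H2 {Ω S T : Type*} (p : PMF Ω) (X : Ω → S) (Y : Ω → T) : ℝ :=
  H p (fun ω => (X ω, Y ω))

/-- Conditional entropy `H(X | Y) = H(X, Y) - H(Y)`. -/
noncomputable def condEnt {Ω S T : Type*} (p : PMF Ω) (X : Ω → S) (Y : Ω → T) : ℝ :=
  H2 p X Y - H p Y

/-- Mutual information `I(X; Y) = H(X) + H(Y) - H(X, Y)`. -/
noncomputable def mutInfo {Ω S T : Type*} (p : PMF Ω) (X : Ω → S) (Y : Ω → T) : ℝ :=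
  H p X + H p Y - H2 p X Y

/-- Conditional mutual information `I(X; Y | Z) = H(X,Z) + H(Y,Z) - H(X,Y,Z) - H(Z)`. -/
noncomputable def condMutInfo {Ω S T U : Type*} (p : PMF Ω)
    (X : Ω → S) (Y : Ω → T) (Z : Ω → U) : ℝ :=
  H2 p X Z + H2 p Y Z - H p (fun ω => (X ω, Y ω, Z ω)) - H p Z

/-- `Z` is almost surely a deterministic function of `X`,
i.e. `Z = φ ∘ X` on the support of `p` for some function `φ`. -/
def IsDetFnOf {Ω S T : Type*} (p : PMF Ω) (Z : Ω → T) (X : Ω → S) : Prop :=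
  ∃ φ : S → T, ∀ ω ∈ p.support, Z ω = φ (X ω)

end DiamondWiretap

namespace DiamondWiretap

/-- The probability `P(X = s)`, as a real number. -/
noncomputable def pr {Ω S : Type*} (p : PMF Ω) (X : Ω → S) (s : S) : ℝ := ((p.map X) s).toReal

lemma pr_nonneg {Ω S : Type*} (p : PMF Ω) (X : Ω → S) (s : S) : 0 ≤ pr p X s :=
  ENNReal.toReal_nonneg

lemma sum_pr {Ω S : Type*} [Fintype S] (p : PMF Ω) (X : Ω → S) : ∑ s, pr p X s = 1 := by
  have h := (p.map X).tsum_coe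
  rw [tsum_fintype] at h
  unfold pr
  rw [← ENNReal.toReal_sum (fun s _ => (p.map X).apply_ne_top s), h, ENNReal.toReal_one]

open Classical in
lemma pr_comp {Ω S T : Type*} [Fintype S] (p : PMF Ω) (X : Ω → S) (g : S → T) (t : T) :
    pr p (fun ω => g (X ω)) t = ∑ s with g s = t, pr p X s := by
  have h : p.map (fun ω => g (X ω)) = (p.map X).map g := by
    rw [PMF.map_comp]; rfl
  unfold pr
  rw [h, PMF.map_apply, tsum_fintype,
    ENNReal.toReal_sum (fun s _ => by split_ifs; exacts [(p.map X).apply_ne_top s, by simp]),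
    Finset.sum_filter]
  refine Finset.sum_congr rfl fun s _ => ?_
  by_cases hs : g s = t
  · simp [hs]
  · simp [hs, Ne.symm hs]

lemma pr_le_pr_comp {Ω S T : Type*} [Fintype S] (p : PMF Ω) (X : Ω → S) (g : S → T) (s : S) :
    pr p X s ≤ pr p (fun ω => g (X ω)) (g s) := by
  classical
  rw [pr_comp p X g]
  exact Finset.single_le_sum (f := fun s => pr p X s) (fun i _ => pr_nonneg p X i) (by simp)

/-- The entropy of `g(X)` as an expectation over the law of the finer variable `X`. -/
lemma H_comp {Ω S T : Type*} [Fintype S] [Fintype T] (p : PMF Ω) (X : Ω → S) (g : S → T) :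
    H p (fun ω => g (X ω)) = -∑ s, pr p X s * Real.log (pr p (fun ω => g (X ω)) (g s)) := by
  classical
  rw [H, tsum_fintype, ← Finset.sum_fiberwise Finset.univ g, ← Finset.sum_neg_distrib]
  refine Finset.sum_congr rfl fun t _ => ?_
  have h : ∑ s with g s = t, pr p X s * Real.log (pr p (fun ω => g (X ω)) (g s))
      = pr p (fun ω => g (X ω)) t * Real.log (pr p (fun ω => g (X ω)) t) := by
    conv_rhs => enter [1]; rw [pr_comp p X g t]
    rw [Finset.sum_mul]
    refine Finset.sum_congr rfl fun s hs => ?_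
    rw [(Finset.mem_filter.1 hs).2]
  rw [h, Real.negMulLog, neg_mul]
  rfl

lemma H_congr {Ω S : Type*} (p : PMF Ω) {X Y : Ω → S} (h : ∀ ω ∈ p.support, X ω = Y ω) :
    H p X = H p Y := by
  have : p.map X = p.map Y := by
    classical
    ext s
    rw [PMF.map_apply, PMF.map_apply]
    refine tsum_congr fun ω => ?_
    by_cases hω : ω ∈ p.support
    · rw [h ω hω]
    · simp [(p.apply_eq_zero_iff ω).2 hω]
  rw [H, H, this]

lemma H_mono {Ω S T : Type*} [Finite S] [Finite T] (p : PMF Ω) {X : Ω → S} {Z : Ω → T}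
    (h : IsDetFnOf p Z X) : H p Z ≤ H p X := by
  cases nonempty_fintype S
  cases nonempty_fintype T
  obtain ⟨φ, hφ⟩ := h
  rw [H_congr p hφ, H_comp p X φ, show H p X = _ from H_comp p X id]
  refine neg_le_neg (Finset.sum_le_sum fun s _ => ?_)
  rcases (pr_nonneg p X s).eq_or_lt with h0 | h0
  · simp [← h0]
  · exact mul_le_mul_of_nonneg_left (Real.log_le_log h0 (pr_le_pr_comp p X φ s)) h0.le

/-- The termwise form of `log t ≤ t - 1` behind submodularity: `r`, `x`, `y`, `z` are the
probabilities of `(a, b, c)`, `(a, c)`, `(b, c)` and `c`. -/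
lemma mul_log_le {r x y z : ℝ} (hr : 0 ≤ r) (hx : r ≤ x) (hy : r ≤ y) (hz : r ≤ z) :
    r * (Real.log x + Real.log y - Real.log r - Real.log z) ≤ x * y / z - r := by
  rcases hr.eq_or_lt with h0 | h0
  · subst h0
    simp only [zero_mul, sub_zero]
    positivity
  · have hx0 : 0 < x := by linarith
    have hy0 : 0 < y := by linarith
    have hz0 : 0 < z := by linarith
    have h := Real.log_le_sub_one_of_pos (show 0 < x * y / (r * z) by positivity)
    rw [Real.log_div (by positivity) (by positivity), Real.log_mul hx0.ne' hy0.ne',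
      Real.log_mul h0.ne' hz0.ne'] at h
    calc _ = r * (Real.log x + Real.log y - (Real.log r + Real.log z)) := by ring
      _ ≤ r * (x * y / (r * z) - 1) := mul_le_mul_of_nonneg_left h h0.le
      _ = _ := by field_simp

lemma sum_pr_pair {Ω A C : Type*} [Fintype A] [Fintype C] (p : PMF Ω) (X : Ω → A) (Z : Ω → C)
    (c : C) : ∑ a, pr p (fun ω => (X ω, Z ω)) (a, c) = pr p Z c := by
  classical
  rw [show pr p Z c = _ from pr_comp p (fun ω => (X ω, Z ω)) Prod.snd c, Finset.sum_filter,
    Fintype.sum_prod_type]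
  simp

/-- Submodularity of entropy, i.e. `I(A; B | C) ≥ 0`. -/
lemma H_submod {Ω A B C : Type*} [Finite A] [Finite B] [Finite C] (p : PMF Ω)
    (X : Ω → A) (Y : Ω → B) (Z : Ω → C) :
    H p (fun ω => (X ω, Y ω, Z ω)) + H p Z
      ≤ H p (fun ω => (X ω, Z ω)) + H p (fun ω => (Y ω, Z ω)) := by
  cases nonempty_fintype A
  cases nonempty_fintype B
  cases nonempty_fintype C
  set F : Ω → A × B × C := fun ω => (X ω, Y ω, Z ω) with hF
  have e0 : H p F = _ := H_comp p F id
  have e1 : H p Z = _ := H_comp p F (fun u => u.2.2)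
  have e2 : H p (fun ω => (X ω, Z ω)) = _ := H_comp p F (fun u => (u.1, u.2.2))
  have e3 : H p (fun ω => (Y ω, Z ω)) = _ := H_comp p F (fun u => u.2)
  have key : ∑ u : A × B × C, pr p F u *
        (Real.log (pr p (fun ω => (X ω, Z ω)) (u.1, u.2.2))
          + Real.log (pr p (fun ω => (Y ω, Z ω)) u.2)
          - Real.log (pr p F u) - Real.log (pr p Z u.2.2))
      ≤ ∑ u : A × B × C, (pr p (fun ω => (X ω, Z ω)) (u.1, u.2.2)
          * pr p (fun ω => (Y ω, Z ω)) u.2 / pr p Z u.2.2 - pr p F u) :=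
    Finset.sum_le_sum fun u _ => mul_log_le (pr_nonneg _ _ _)
      (pr_le_pr_comp p F (fun u => (u.1, u.2.2)) u) (pr_le_pr_comp p F (fun u => u.2) u)
      (pr_le_pr_comp p F (fun u => u.2.2) u)
  have hs : ∑ u : A × B × C, pr p (fun ω => (X ω, Z ω)) (u.1, u.2.2)
          * pr p (fun ω => (Y ω, Z ω)) u.2 / pr p Z u.2.2 = 1 := by
    rw [← sum_pr p Z, Fintype.sum_prod_type, Finset.sum_comm, Fintype.sum_prod_type,
      Finset.sum_comm]
    refine Finset.sum_congr rfl fun c _ => ?_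
    simp only [← Finset.sum_div, ← Finset.sum_mul, ← Finset.mul_sum, sum_pr_pair]
    -- This also holds when `P(Z = c) = 0`, by `0 / 0 = 0`.
    exact mul_self_div_self _
  rw [Finset.sum_sub_distrib, hs, sum_pr, sub_self] at key
  simp only [mul_sub, mul_add, Finset.sum_sub_distrib, Finset.sum_add_distrib] at key
  rw [e0, e1, e2, e3]
  simp only [id_eq]
  linarith

lemma H_const {Ω : Type*} (p : PMF Ω) : H p (fun _ => ()) = 0 := by
  have h := sum_pr p (fun _ : Ω => ())
  simp only [Fintype.sum_unique, pr] at h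
  rw [H, tsum_fintype, Fintype.sum_unique, h, Real.negMulLog_one]

lemma H_pair_le {Ω A B : Type*} [Finite A] [Finite B] (p : PMF Ω) (X : Ω → A) (Y : Ω → B) :
    H p (fun ω => (X ω, Y ω)) ≤ H p X + H p Y := by
  have h := H_submod p X Y (fun _ => ())
  have h1 : H p (fun ω => (X ω, Y ω)) ≤ H p (fun ω => (X ω, Y ω, ())) :=
    H_mono p ⟨fun u => (u.1, u.2.1), fun _ _ => rfl⟩
  have h2 : H p (fun ω => (X ω, ())) ≤ H p X := H_mono p ⟨fun u => (u, ()), fun _ _ => rfl⟩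
  have h3 : H p (fun ω => (Y ω, ())) ≤ H p Y := H_mono p ⟨fun u => (u, ()), fun _ _ => rfl⟩
  linarith [H_const p]

lemma H_pi_le {Ω : Type*} (p : PMF Ω) : ∀ (n : ℕ) (S : Fin n → Type*) [∀ k, Finite (S k)]
    (V : (k : Fin n) → Ω → S k), H p (fun ω k => V k ω) ≤ ∑ k, H p (V k)
  | 0, S, _, V => by
    have h : H p (fun ω k => V k ω) ≤ H p (fun _ => ()) :=
      H_mono p ⟨fun _ k => k.elim0, fun _ _ => funext fun k => k.elim0⟩
    simpa [H_const] using h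
  | n + 1, S, _, V => by
    have h : H p (fun ω k => V k ω) ≤ H p (fun ω => (V 0 ω, fun k : Fin n => V k.succ ω)) :=
      H_mono p ⟨fun u => Fin.cons u.1 u.2, fun ω _ => (Fin.cons_self_tail (fun k => V k ω)).symm⟩
    have h1 := H_pair_le p (V 0) (fun ω (k : Fin n) => V k.succ ω)
    have h2 := H_pi_le p n (fun k => S k.succ) (fun k => V k.succ)
    rw [Fin.sum_univ_succ]
    linarith

/-- Data processing through `V` for `Y1`, together with `H(V | W) ≥ H(Y2 | W)`. -/
lemma mutInfo_sub_le {Ω A B C D : Type*} [Finite A] [Finite B] [Finite C] [Finite D] (p : PMF Ω)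
    (W : Ω → A) (Y1 : Ω → B) (Y2 : Ω → C) (V : Ω → D)
    (h1 : IsDetFnOf p Y1 V) (h2 : IsDetFnOf p Y2 V) :
    mutInfo p W Y1 - mutInfo p W Y2 ≤ H p V - H p Y2 := by
  obtain ⟨φ, hφ⟩ := h1
  obtain ⟨ψ, hψ⟩ := h2
  have a := H_submod p W V Y1
  have b : H p (fun ω => (V ω, Y1 ω)) ≤ H p V :=
    H_mono p ⟨fun v => (v, φ v), fun ω hω => Prod.ext rfl (hφ ω hω)⟩
  have c : H p (fun ω => (W ω, V ω)) ≤ H p (fun ω => (W ω, V ω, Y1 ω)) :=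
    H_mono p ⟨fun u => (u.1, u.2.1), fun _ _ => rfl⟩
  have d : H p (fun ω => (W ω, Y2 ω)) ≤ H p (fun ω => (W ω, V ω)) :=
    H_mono p ⟨fun u => (u.1, ψ u.2), fun ω hω => Prod.ext rfl (hψ ω hω)⟩
  unfold mutInfo H2
  linarith

/-- `H(X | J, X') - H(X | Z) ≤ H(Y | W)` when `W` and `Y` are independent given `J` and `Z` is a
function of `(Y, X')`. -/
lemma condEnt_sub_le {Ω A B C D E F : Type*} [Finite A] [Finite B] [Finite C] [Finite D]
    [Finite E] [Finite F] (p : PMF Ω) (W : Ω → A) (Y : Ω → B) (J : Ω → C) (X : Ω → D)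
    (X' : Ω → E) (Z : Ω → F) (hZ : IsDetFnOf p Z (fun ω => (Y ω, X' ω)))
    (hW : condMutInfo p W Y J = 0) :
    condEnt p X (fun ω => (J ω, X' ω)) - condEnt p X Z ≤ H2 p W Y - H p W := by
  obtain ⟨φ, hφ⟩ := hZ
  have a := H_submod p Y J W
  have a1 : H p (fun ω => (W ω, Y ω, J ω)) ≤ H p (fun ω => (Y ω, J ω, W ω)) :=
    H_mono p ⟨fun u => (u.2.2, u.1, u.2.1), fun _ _ => rfl⟩
  have a2 : H p (fun ω => (J ω, W ω)) ≤ H p (fun ω => (W ω, J ω)) :=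
    H_mono p ⟨Prod.swap, fun _ _ => rfl⟩
  have a3 : H p (fun ω => (Y ω, W ω)) ≤ H p (fun ω => (W ω, Y ω)) :=
    H_mono p ⟨Prod.swap, fun _ _ => rfl⟩
  have b := H_submod p Y X' J
  have b1 : H p (fun ω => (X' ω, J ω)) ≤ H p (fun ω => (J ω, X' ω)) :=
    H_mono p ⟨Prod.swap, fun _ _ => rfl⟩
  have b2 : H p (fun ω => ((J ω, X' ω), Z ω)) ≤ H p (fun ω => (Y ω, X' ω, J ω)) :=
    H_mono p ⟨fun u => ((u.2.2, u.2.1), φ (u.1, u.2.1)), fun ω hω => Prod.ext rfl (hφ ω hω)⟩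
  have c := H_submod p X (fun ω => (J ω, X' ω)) Z
  have c1 : H p (fun ω => (X ω, J ω, X' ω)) ≤ H p (fun ω => (X ω, (J ω, X' ω), Z ω)) :=
    H_mono p ⟨fun u => (u.1, u.2.1), fun _ _ => rfl⟩
  unfold condMutInfo H2 at hW
  unfold condEnt H2
  linarith

end DiamondWiretap

open DiamondWiretap

/-- core entropy inequality of the converse proof of Theorem 6
(`M`-relay case, no eavesdropper's CSI):
`(M+1)·I(W; Y1) − I(W; Y2) ≤ ∑_k H(J_k) + M·H(Y1) − H(Y2) + ∑_k H(X_k | Z_k)`. -/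
theorem stmt10 {Ω SW T1 T2 : Type*} (M : ℕ) (hM : 2 ≤ M)
    [Fintype SW] [Fintype T1] [Fintype T2]
    (S TJ TZ : Fin M → Type*) [∀ k, Fintype (S k)] [∀ k, Fintype (TJ k)]
    [∀ k, Fintype (TZ k)]
    (p : PMF Ω) (W : Ω → SW) (Y1 : Ω → T1) (Y2 : Ω → T2)
    (X : (k : Fin M) → Ω → S k) (J : (k : Fin M) → Ω → TJ k)
    (Z : (k : Fin M) → Ω → TZ k)
    (hY1 : IsDetFnOf p Y1 (fun ω => (fun k => X k ω : (k : Fin M) → S k)))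
    (hY2 : IsDetFnOf p Y2 (fun ω => (fun k => X k ω : (k : Fin M) → S k)))
    (hZa : ∀ k : Fin M, IsDetFnOf p (Z k) (X k))
    (hZb : ∀ k : Fin M, IsDetFnOf p (Z k)
      (fun ω => (Y1 ω, fun j : {j : Fin M // j ≠ k} => X j.1 ω)))
    (hMarkov : ∀ k : Fin M,
      condEnt p (X k)
        (fun ω => ((fun j => J j ω : (j : Fin M) → TJ j),
                   (fun j : {j : Fin M // j ≠ k} => X j.1 ω)))
        = condEnt p (X k) (J k))
    (hMarkovW : condMutInfo p W Y1
      (fun ω => (fun k => J k ω : (k : Fin M) → TJ k)) = 0) :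
    ((M : ℝ) + 1) * mutInfo p W Y1 - mutInfo p W Y2
      ≤ (∑ k : Fin M, H p (J k))
        + (M : ℝ) * H p Y1 - H p Y2
        + ∑ k : Fin M, condEnt p (X k) (Z k) := by
  have h1 := mutInfo_sub_le p W Y1 Y2 _ hY1 hY2
  have h2 : H p (fun ω k => X k ω) ≤ H p (fun ω k => (X k ω, J k ω)) :=
    H_mono p ⟨fun u k => (u k).1, fun _ _ => rfl⟩
  have h3 := H_pi_le p M (fun k => S k × TJ k) (fun k ω => (X k ω, J k ω))
  have h4 : ∑ k, (condEnt p (X k) (J k) - condEnt p (X k) (Z k))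
      ≤ ∑ _k : Fin M, (H2 p W Y1 - H p W) := by
    refine Finset.sum_le_sum fun k _ => ?_
    rw [← hMarkov k]
    exact condEnt_sub_le p W Y1 _ (X k) _ (Z k) (hZb k) hMarkovW
  have h5 : ∑ k, condEnt p (X k) (J k) = ∑ k, H p (fun ω => (X k ω, J k ω)) - ∑ k, H p (J k) := by
    rw [← Finset.sum_sub_distrib]; rfl
  rw [Finset.sum_sub_distrib, h5, Finset.sum_const, Finset.card_univ, Fintype.card_fin,
    nsmul_eq_mul] at h4
  have h6 : (M : ℝ) * mutInfo p W Y1 = M * H p Y1 - M * (H2 p W Y1 - H p W) := by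
    unfold mutInfo; ring
  linarith
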